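/- Let $1 < p < \infty$, let $\mathcal{S}$ be a sparse family of dyadic cubes contained in a cube $R$, and let $w \in A_p$ with $\sigma = w^{1-p'}$. Then the dual testing constant for the sparse operator satisfies $\int_R (T^{\mathcal{S}(R)} w)^{p'} \sigma \, dx \lesssim [w]_{(A_p)^{1/(p-1)}(A_\infty^{\exp})^{1-1/(p-1)}}^{p'} \, w(R)$, where the implicit constant depends only on $p$ and dimension. -/

import Mathlib

open MeasureTheory Set
open scoped ENNReal

noncomputable section

/-- A (closed, axis-parallel, nondegenerate) cube in `ℝⁿ`. -/
def IsCube {n : ℕ} (Q : Set (Fin n → ℝ)) : Prop :=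
  ∃ (a : Fin n → ℝ) (l : ℝ), 0 < l ∧ Q = Set.Icc a (a + fun _ => l)

/-- The average `⨍_Q f` of `f` over `Q` (w.r.t. Lebesgue measure). -/
def avg {n : ℕ} (Q : Set (Fin n → ℝ)) (f : (Fin n → ℝ) → ℝ) : ℝ :=
  (volume Q).toReal⁻¹ * ∫ x in Q, f x

/-- The `A_p` quantity `A_p(w,Q) = (⨍_Q w) (⨍_Q w^{-1/(p-1)})^{p-1}`. -/
def ApQ {n : ℕ} (p : ℝ) (w : (Fin n → ℝ) → ℝ) (Q : Set (Fin n → ℝ)) : ℝ :=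
  avg Q w * (avg Q fun x => w x ^ (-(1 / (p - 1)))) ^ (p - 1)

/-- The exponential `A_∞` quantity `A_∞^exp(w,Q) = (⨍_Q w) exp(-⨍_Q log w)`. -/
def AexpQ {n : ℕ} (w : (Fin n → ℝ) → ℝ) (Q : Set (Fin n → ℝ)) : ℝ :=
  avg Q w * Real.exp (-(avg Q fun x => Real.log (w x)))

/-- A dyadic cube of generation `k` (half-open, side length `2^k`). -/
def IsDyadicCubeOf {n : ℕ} (k : ℤ) (Q : Set (Fin n → ℝ)) : Prop :=
  ∃ a : Fin n → ℝ, Q = Set.univ.pi fun i => Set.Ico (a i) (a i + (2 : ℝ) ^ k)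

/-- A dyadic grid: a collection of cubes of side lengths `2^k`, pairwise nested or
disjoint, partitioning `ℝⁿ` at each scale. -/
def IsDyadicGrid {n : ℕ} (𝒟 : Set (Set (Fin n → ℝ))) : Prop :=
  (∀ Q ∈ 𝒟, ∃ k : ℤ, IsDyadicCubeOf k Q) ∧
  (∀ Q ∈ 𝒟, ∀ P ∈ 𝒟, Q ⊆ P ∨ P ⊆ Q ∨ Disjoint Q P) ∧
  (∀ k : ℤ, ⋃₀ {Q | Q ∈ 𝒟 ∧ IsDyadicCubeOf k Q} = Set.univ ∧
    Set.PairwiseDisjoint {Q | Q ∈ 𝒟 ∧ IsDyadicCubeOf k Q} id)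

/-- The union of the strict subcubes of `Q` belonging to the family `𝒮`. -/
def strictUnion {n : ℕ} (𝒮 : Set (Set (Fin n → ℝ))) (Q : Set (Fin n → ℝ)) :
    Set (Fin n → ℝ) :=
  ⋃ Q' ∈ {Q' | Q' ∈ 𝒮 ∧ Q' ⊂ Q}, Q'

/-- The "major subset" `E_Q = Q \ ⋃ {Q' ∈ 𝒮 : Q' ⊊ Q}`. -/
def Eset {n : ℕ} (𝒮 : Set (Set (Fin n → ℝ))) (Q : Set (Fin n → ℝ)) :
    Set (Fin n → ℝ) :=
  Q \ strictUnion 𝒮 Q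

/-- A sparse family: for each `Q ∈ 𝒮`, `|⋃ {Q' ∈ 𝒮 : Q' ⊊ Q}| ≤ |Q|/2`. -/
def IsSparse {n : ℕ} (𝒮 : Set (Set (Fin n → ℝ))) : Prop :=
  ∀ Q ∈ 𝒮, volume (strictUnion 𝒮 Q) ≤ volume Q / 2

/-- The sparse operator `T^𝒮 f = ∑_{Q ∈ 𝒮} (⨍_Q f) χ_Q` (with values in `ℝ≥0∞`). -/
def sparseT {n : ℕ} (𝒮 : Set (Set (Fin n → ℝ))) (f : (Fin n → ℝ) → ℝ)
    (x : Fin n → ℝ) : ℝ≥0∞ :=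
  ∑' Q : 𝒮, Set.indicator Q.1 (fun _ => ENNReal.ofReal (avg Q.1 f)) x

theorem rpow_tangent_le {p : ℝ} (hp : 1 < p) {a t : ℝ} (ha : 0 ≤ a) (ht : 0 ≤ t) :
    a ^ p + p * a ^ (p - 1) * (t - a) ≤ t ^ p := by
  rcases ha.eq_or_lt with rfl | ha
  · rw [Real.zero_rpow (by linarith), Real.zero_rpow (by linarith)]
    simpa using Real.rpow_nonneg ht p
  · have h := one_add_mul_self_le_rpow_one_add (s := t / a - 1)
      (by linarith [div_nonneg ht ha.le]) hp.le
    rw [add_sub_cancel, Real.div_rpow ht ha.le, le_div_iff₀ (Real.rpow_pos_of_pos ha p)] at h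
    have h2 : a ^ p = a ^ (p - 1) * a := by
      rw [← Real.rpow_add_one ha.ne', sub_add_cancel]
    calc a ^ p + p * a ^ (p - 1) * (t - a) = (1 + p * (t / a - 1)) * a ^ p := by
          rw [h2]; field_simp
      _ ≤ t ^ p := h

theorem integral_mul_rpow_le {α : Type*} [MeasurableSpace α] {μ : Measure α} {p : ℝ} (hp : 1 < p)
    {s g : α → ℝ} (hs : ∀ x, 0 ≤ s x) (hg : ∀ x, 0 ≤ g x) (hsi : Integrable s μ)
    (hgi : Integrable (fun x => g x * s x) μ) (hgp : Integrable (fun x => g x ^ p * s x) μ) :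
    (∫ x, g x * s x ∂μ) ^ p / (∫ x, s x ∂μ) ^ (p - 1) ≤ ∫ x, g x ^ p * s x ∂μ := by
  have hN : 0 ≤ ∫ x, g x ^ p * s x ∂μ :=
    integral_nonneg fun x => mul_nonneg (Real.rpow_nonneg (hg x) p) (hs x)
  have hG : 0 ≤ ∫ x, g x * s x ∂μ := integral_nonneg fun x => mul_nonneg (hg x) (hs x)
  have hm : 0 ≤ ∫ x, s x ∂μ := integral_nonneg hs
  set G := ∫ x, g x * s x ∂μ
  set m := ∫ x, s x ∂μ with hmdef
  rcases hm.eq_or_lt with h0 | hm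
  · rw [← h0, Real.zero_rpow (by linarith), div_zero]
    exact hN
  · set a := G / m with ha
    have ha0 : 0 ≤ a := div_nonneg hG hm.le
    have key : ∫ x, (a ^ p * s x + p * a ^ (p - 1) * (g x * s x - a * s x)) ∂μ
        ≤ ∫ x, g x ^ p * s x ∂μ := by
      refine integral_mono ((hsi.const_mul _).add ((hgi.sub (hsi.const_mul _)).const_mul _)) hgp
        fun x => ?_
      have := mul_le_mul_of_nonneg_right (rpow_tangent_le hp ha0 (hg x)) (hs x)
      simp only
      linarith
    have hd : Integrable (fun x => g x * s x - a * s x) μ := hgi.sub (hsi.const_mul _)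
    rw [integral_add (hsi.const_mul _) (hd.const_mul _), integral_const_mul, integral_const_mul,
      integral_sub hgi (hsi.const_mul _), integral_const_mul, ← hmdef] at key
    have e1 : G - a * m = 0 := by rw [ha]; field_simp; ring
    have e2 : G ^ p / m ^ (p - 1) = a ^ p * m := by
      rw [ha, Real.div_rpow hG hm.le, Real.rpow_sub_one hm.ne']
      field_simp
    change a ^ p * m + p * a ^ (p - 1) * (G - a * m) ≤ _ at key
    rw [e2]
    rw [e1] at key
    linarith

theorem add_rpow_div_add_rpow_le {p : ℝ} (hp : 1 < p) {a b s t : ℝ} (ha : 0 ≤ a) (hb : 0 ≤ b)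
    (hs : 0 < s) (ht : 0 ≤ t) (hbt : t = 0 → b = 0) :
    (a + b) ^ p / (s + t) ^ (p - 1) ≤ a ^ p / s ^ (p - 1) + b ^ p / t ^ (p - 1) := by
  rcases ht.eq_or_lt with h0 | ht
  · have hb0 := hbt h0.symm
    subst hb0
    rw [← h0, add_zero, add_zero, Real.zero_rpow (by linarith), zero_div, add_zero]
  have h := (convexOn_rpow hp.le).2 (mem_Ici.2 (div_nonneg ha hs.le))
    (mem_Ici.2 (div_nonneg hb ht.le)) (show 0 ≤ s / (s + t) by positivity)
    (show 0 ≤ t / (s + t) by positivity) (by field_simp)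
  simp only [smul_eq_mul] at h
  have e1 : s / (s + t) * (a / s) + t / (s + t) * (b / t) = (a + b) / (s + t) := by
    field_simp
  have hst : 0 < s + t := by positivity
  rw [e1, Real.div_rpow ha hs.le, Real.div_rpow hb ht.le, Real.div_rpow (by positivity) hst.le] at h
  have e2 : ∀ x u : ℝ, 0 < u → x / u ^ (p - 1) = u * (x / u ^ p) := by
    intro x u hu
    rw [Real.rpow_sub_one hu.ne']
    field_simp
  rw [e2 _ _ hst, e2 _ _ hs, e2 _ _ ht]
  calc _ ≤ (s + t) * (s / (s + t) * (a ^ p / s ^ p) + t / (s + t) * (b ^ p / t ^ p)) := by gcongr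
    _ = _ := by field_simp

theorem rpow_div_rpow_add_gain_le {p : ℝ} (hp : 1 < p) {G m V c : ℝ} (hG : 0 ≤ G) (hm : 0 < m)
    (hV : 0 < V) (hc : 0 ≤ c) (h2 : V + c ≤ 2 * m) :
    (p - 1) / 2 ^ p * (c * (G / m) ^ p) + G ^ p / (V + c) ^ (p - 1) ≤ G ^ p / V ^ (p - 1) := by
  have hVc : 0 < V + c := by positivity
  set u := V / (V + c) with hu
  have hu0 : 0 < u := by positivity
  have h1 : 1 + (p - 1) * (1 - u) ≤ u ^ (-(p - 1)) := by
    rw [Real.rpow_def_of_pos hu0]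
    have := Real.add_one_le_exp (Real.log u * -(p - 1))
    have h3 := Real.log_le_sub_one_of_pos hu0
    nlinarith
  have e1 : 1 - u = c / (V + c) := by rw [hu]; field_simp; ring
  have e2 : u ^ (-(p - 1)) = (V + c) ^ (p - 1) / V ^ (p - 1) := by
    rw [Real.rpow_neg hu0.le, hu, Real.div_rpow hV.le hVc.le, inv_div]
  rw [e1, e2] at h1
  have hGp : 0 ≤ G ^ p := Real.rpow_nonneg hG p
  have hw : 0 < (V + c) ^ (p - 1) := Real.rpow_pos_of_pos hVc _
  have h4 : G ^ p / (V + c) ^ (p - 1) * (1 + (p - 1) * (c / (V + c))) ≤ G ^ p / V ^ (p - 1) := by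
    calc _ ≤ G ^ p / (V + c) ^ (p - 1) * ((V + c) ^ (p - 1) / V ^ (p - 1)) := by gcongr
      _ = _ := by field_simp
  have h5 : (V + c) ^ p ≤ 2 ^ p * m ^ p := by
    rw [← Real.mul_rpow (by norm_num) hm.le]
    exact Real.rpow_le_rpow hVc.le h2 (by linarith)
  have h6 : (V + c) ^ p = (V + c) ^ (p - 1) * (V + c) := by
    rw [← Real.rpow_add_one hVc.ne', sub_add_cancel]
  have h7 : (p - 1) / 2 ^ p * (c * (G / m) ^ p) ≤ (p - 1) * c * G ^ p / (V + c) ^ p := by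
    have : 0 ≤ p - 1 := by linarith
    calc _ = (p - 1) * c * G ^ p / (2 ^ p * m ^ p) := by
          rw [Real.div_rpow hG hm.le]; field_simp
      _ ≤ _ := by gcongr
  rw [h6] at h7
  have h8 : G ^ p / (V + c) ^ (p - 1) * (1 + (p - 1) * (c / (V + c)))
      = G ^ p / (V + c) ^ (p - 1) + (p - 1) * c * G ^ p / ((V + c) ^ (p - 1) * (V + c)) := by
    field_simp
  linarith

open Classical in
theorem carleson_embedding_aux {α : Type*} [MeasurableSpace α] {μ : Measure α} {p : ℝ} (hp : 1 < p)
    {s g : α → ℝ} (hs : ∀ x, 0 ≤ s x) (hg : ∀ x, 0 ≤ g x) {c : Set α → ℝ} (hc : ∀ Q, 0 ≤ c Q)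
    (F : Finset (Set α)) (U : Set α) (hsi : IntegrableOn s U μ)
    (hgi : IntegrableOn (fun x => g x * s x) U μ)
    (hgp : IntegrableOn (fun x => g x ^ p * s x) U μ)
    (hF : ∀ Q ∈ F, MeasurableSet Q ∧ Q ⊆ U ∧ 0 < ∫ x in Q, s x ∂μ)
    (hlam : ∀ Q ∈ F, ∀ P ∈ F, Q ⊆ P ∨ P ⊆ Q ∨ Disjoint Q P)
    (hcar : ∀ P ∈ F, ∑ Q ∈ F with Q ⊆ P, c Q ≤ ∫ x in P, s x ∂μ) :
    ∑ Q ∈ F, (p - 1) / 2 ^ p * (c Q * ((∫ x in Q, g x * s x ∂μ) / ∫ x in Q, s x ∂μ) ^ p) +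
      (∫ x in U, g x * s x ∂μ) ^ p / ((∫ x in U, s x ∂μ) + ∑ Q ∈ F, c Q) ^ (p - 1) ≤
      ∫ x in U, g x ^ p * s x ∂μ := by
  induction hk : F.card using Nat.strong_induction_on generalizing F U with
  | _ k ih =>
  rcases F.eq_empty_or_nonempty with rfl | hne
  · simpa using integral_mul_rpow_le hp hs hg hsi hgi hgp
  obtain ⟨P, hP⟩ := F.exists_maximal hne
  have hPF := hP.prop
  obtain ⟨hPm, hPU, hPpos⟩ := hF P hPF
  set Fi := (F.erase P).filter (· ⊆ P) with hFi
  set Fo := (F.erase P).filter (¬ · ⊆ P) with hFo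
  have hFiF : Fi ⊆ F := (Finset.filter_subset _ _).trans (Finset.erase_subset _ _)
  have hFoF : Fo ⊆ F := (Finset.filter_subset _ _).trans (Finset.erase_subset _ _)
  have hcard := Finset.card_erase_lt_of_mem hPF
  have hsub : ∀ F' ⊆ F, ∀ Q ∈ F', ∑ Q' ∈ F' with Q' ⊆ Q, c Q' ≤ ∫ x in Q, s x ∂μ :=
    fun F' hF' Q hQ => (Finset.sum_le_sum_of_subset_of_nonneg
      (Finset.filter_subset_filter _ hF') fun _ _ _ => hc _).trans (hcar Q (hF' hQ))
  have hdis : ∀ Q ∈ Fo, Disjoint Q P := by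
    intro Q hQ
    have hQ' := Finset.mem_filter.1 hQ
    rcases hlam Q (hFoF hQ) P hPF with h | h | h
    · exact absurd h hQ'.2
    · exact absurd (hP.2 (hFoF hQ) h) hQ'.2
    · exact h
  have hi := ih Fi.card (by subst hk; exact (Finset.card_filter_le _ _).trans_lt hcard) Fi P
    (hsi.mono_set hPU) (hgi.mono_set hPU) (hgp.mono_set hPU)
    (fun Q hQ => ⟨(hF Q (hFiF hQ)).1, (Finset.mem_filter.1 hQ).2, (hF Q (hFiF hQ)).2.2⟩)
    (fun Q hQ Q' hQ' => hlam Q (hFiF hQ) Q' (hFiF hQ')) (hsub Fi hFiF) rfl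
  have ho := ih Fo.card (by subst hk; exact (Finset.card_filter_le _ _).trans_lt hcard) Fo (U \ P)
    (hsi.mono_set sdiff_subset) (hgi.mono_set sdiff_subset) (hgp.mono_set sdiff_subset)
    (fun Q hQ => ⟨(hF Q (hFoF hQ)).1,
      subset_sdiff.2 ⟨(hF Q (hFoF hQ)).2.1, hdis Q hQ⟩, (hF Q (hFoF hQ)).2.2⟩)
    (fun Q hQ Q' hQ' => hlam Q (hFoF hQ) Q' (hFoF hQ')) (hsub Fo hFoF) rfl
  have hsplit : ∀ f : Set α → ℝ, ∑ Q ∈ F, f Q = f P + (∑ Q ∈ Fi, f Q + ∑ Q ∈ Fo, f Q) := by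
    intro f
    rw [← Finset.add_sum_erase F f hPF, Finset.sum_filter_add_sum_filter_not]
  have hint : ∀ f : α → ℝ, IntegrableOn f U μ →
      ∫ x in U, f x ∂μ = ∫ x in P, f x ∂μ + ∫ x in U \ P, f x ∂μ := by
    intro f hf
    have := integral_inter_add_sdiff (s := U) hPm hf
    rw [inter_eq_self_of_subset_right hPU] at this
    exact this.symm
  have hcP : c P + ∑ Q ∈ Fi, c Q ≤ ∫ x in P, s x ∂μ := by
    refine le_trans (le_of_eq ?_) (hcar P hPF)
    rw [← Finset.add_sum_erase (F.filter (· ⊆ P)) c (Finset.mem_filter.2 ⟨hPF, subset_rfl⟩),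
      hFi, Finset.filter_erase]
  rw [hsplit, hsplit, hint _ hsi, hint _ hgi, hint _ hgp]
  have hci : 0 ≤ ∑ Q ∈ Fi, c Q := Finset.sum_nonneg fun Q _ => hc Q
  have hco : 0 ≤ ∑ Q ∈ Fo, c Q := Finset.sum_nonneg fun Q _ => hc Q
  have hGP : 0 ≤ ∫ x in P, g x * s x ∂μ := integral_nonneg fun x => mul_nonneg (hg x) (hs x)
  have hGo : 0 ≤ ∫ x in U \ P, g x * s x ∂μ := integral_nonneg fun x => mul_nonneg (hg x) (hs x)
  have hmo : 0 ≤ ∫ x in U \ P, s x ∂μ := integral_nonneg hs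
  have hzero : (∫ x in U \ P, s x ∂μ) + ∑ Q ∈ Fo, c Q = 0 → ∫ x in U \ P, g x * s x ∂μ = 0 := by
    intro h
    have h0 : ∫ x in U \ P, s x ∂μ = 0 := by linarith
    rw [integral_eq_zero_iff_of_nonneg hs (hsi.mono_set sdiff_subset)] at h0
    rw [integral_eq_zero_iff_of_nonneg (fun x => mul_nonneg (hg x) (hs x))
      (hgi.mono_set sdiff_subset)]
    filter_upwards [h0] with x hx
    simp [hx]
  have hgain := rpow_div_rpow_add_gain_le hp hGP hPpos
    (V := (∫ x in P, s x ∂μ) + ∑ Q ∈ Fi, c Q) (by positivity) (hc P) (by linarith)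
  have hadd := add_rpow_div_add_rpow_le hp hGP hGo
    (s := (∫ x in P, s x ∂μ) + ∑ Q ∈ Fi, c Q + c P)
    (t := (∫ x in U \ P, s x ∂μ) + ∑ Q ∈ Fo, c Q) (by linarith [hc P]) (by positivity) hzero
  have e : (∫ x in P, s x ∂μ) + ∑ Q ∈ Fi, c Q + c P + ((∫ x in U \ P, s x ∂μ) + ∑ Q ∈ Fo, c Q) =
      ∫ x in P, s x ∂μ + ∫ x in U \ P, s x ∂μ + (c P + (∑ Q ∈ Fi, c Q + ∑ Q ∈ Fo, c Q)) := by
    ring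
  rw [e] at hadd
  linarith

open Classical in
/-- The Carleson embedding theorem for a finite laminar family of sets. -/
theorem carleson_embedding {α : Type*} [MeasurableSpace α] {μ : Measure α} {p : ℝ} (hp : 1 < p)
    {s g : α → ℝ} (hs : ∀ x, 0 ≤ s x) (hg : ∀ x, 0 ≤ g x) {c : Set α → ℝ} (hc : ∀ Q, 0 ≤ c Q)
    {F : Finset (Set α)} {U : Set α} (hsi : IntegrableOn s U μ)
    (hgi : IntegrableOn (fun x => g x * s x) U μ)
    (hgp : IntegrableOn (fun x => g x ^ p * s x) U μ)
    (hF : ∀ Q ∈ F, MeasurableSet Q ∧ Q ⊆ U ∧ 0 < ∫ x in Q, s x ∂μ)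
    (hlam : ∀ Q ∈ F, ∀ P ∈ F, Q ⊆ P ∨ P ⊆ Q ∨ Disjoint Q P) {A : ℝ} (hA : 0 < A)
    (hcar : ∀ P ∈ F, ∑ Q ∈ F with Q ⊆ P, c Q ≤ A * ∫ x in P, s x ∂μ) :
    ∑ Q ∈ F, c Q * ((∫ x in Q, g x * s x ∂μ) / ∫ x in Q, s x ∂μ) ^ p ≤
      A * (2 ^ p / (p - 1)) * ∫ x in U, g x ^ p * s x ∂μ := by
  have h := carleson_embedding_aux hp hs hg (c := fun Q => c Q / A)
    (fun Q => div_nonneg (hc Q) hA.le) F U hsi hgi hgp hF hlam (fun P hP => by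
      rw [← Finset.sum_div, div_le_iff₀ hA, mul_comm]; exact hcar P hP)
  have hp1 : 0 < p - 1 := by linarith
  have h0 : 0 ≤ (∫ x in U, g x * s x ∂μ) ^ p /
      ((∫ x in U, s x ∂μ) + ∑ Q ∈ F, c Q / A) ^ (p - 1) := by
    refine div_nonneg (Real.rpow_nonneg (integral_nonneg fun x => mul_nonneg (hg x) (hs x)) _)
      (Real.rpow_nonneg (add_nonneg (integral_nonneg hs)
        (Finset.sum_nonneg fun Q _ => div_nonneg (hc Q) hA.le)) _)
  have e : ∑ Q ∈ F, c Q * ((∫ x in Q, g x * s x ∂μ) / ∫ x in Q, s x ∂μ) ^ p =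
      A * (2 ^ p / (p - 1)) * ∑ Q ∈ F, (p - 1) / 2 ^ p *
        (c Q / A * ((∫ x in Q, g x * s x ∂μ) / ∫ x in Q, s x ∂μ) ^ p) := by
    rw [Finset.mul_sum]
    refine Finset.sum_congr rfl fun Q _ => ?_
    field_simp
  rw [e]
  gcongr
  linarith

theorem avg_congr_set {n : ℕ} {Q Q' : Set (Fin n → ℝ)} (h : Q =ᵐ[volume] Q')
    (f : (Fin n → ℝ) → ℝ) : avg Q f = avg Q' f := by
  rw [avg, avg, measure_congr h, setIntegral_congr_set h]

theorem setIntegral_pos_of_pos {n : ℕ} {Q : Set (Fin n → ℝ)} (h0 : volume Q ≠ 0)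
    {f : (Fin n → ℝ) → ℝ} (hf : ∀ x, 0 < f x) (hfi : IntegrableOn f Q) : 0 < ∫ x in Q, f x := by
  rw [setIntegral_pos_iff_support_of_nonneg_ae (ae_of_all _ fun x => (hf x).le) hfi]
  have : Function.support f = univ := by
    ext x; simp [(hf x).ne']
  rw [this, univ_inter]
  exact pos_iff_ne_zero.2 h0

/-- Jensen's inequality for the exponential. -/
theorem exp_avg_le {n : ℕ} {Q : Set (Fin n → ℝ)} (h0 : volume Q ≠ 0) (h1 : volume Q ≠ ∞)
    {h : (Fin n → ℝ) → ℝ} (hi : IntegrableOn h Q) (he : IntegrableOn (fun x => Real.exp (h x)) Q) :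
    Real.exp (avg Q h) ≤ avg Q fun x => Real.exp (h x) := by
  have hV : 0 < (volume Q).toReal := ENNReal.toReal_pos h0 h1
  set m := avg Q h with hm
  have hone : IntegrableOn (fun _ : Fin n → ℝ => (1 : ℝ)) Q := integrableOn_const h1
  have hd : IntegrableOn (fun x => h x - m * 1) Q := hi.sub (hone.const_mul m)
  have key : ∫ x in Q, (Real.exp m * 1 + Real.exp m * (h x - m * 1)) ≤ ∫ x in Q, Real.exp (h x) := by
    refine integral_mono ((hone.const_mul _).add (hd.const_mul _)) he fun x => ?_
    have h2 := Real.add_one_le_exp (h x - m)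
    have h3 : Real.exp (h x) = Real.exp m * Real.exp (h x - m) := by
      rw [← Real.exp_add]; ring_nf
    have := Real.exp_pos m
    simp only
    rw [h3]
    nlinarith
  have h4 : ∫ _ in Q, (1 : ℝ) = (volume Q).toReal := by simp [Measure.real]
  have h5 : ∫ x in Q, h x = m * (volume Q).toReal := by
    rw [hm, avg]; field_simp
  rw [integral_add (hone.const_mul _) (hd.const_mul _), integral_const_mul, integral_const_mul,
    integral_sub hi (hone.const_mul _), integral_const_mul, h4, h5] at key
  rw [avg, inv_mul_eq_div, le_div_iff₀ hV]
  linarith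

open Classical in
/-- Summing geometric means over a family with the Carleson packing condition. -/
theorem sum_volume_mul_exp_avg_le {n : ℕ} {F : Finset (Set (Fin n → ℝ))} {U : Set (Fin n → ℝ)}
    (hU : volume U ≠ ∞) (hF : ∀ Q ∈ F, MeasurableSet Q ∧ Q ⊆ U ∧ volume Q ≠ 0)
    (hlam : ∀ Q ∈ F, ∀ P ∈ F, Q ⊆ P ∨ P ⊆ Q ∨ Disjoint Q P)
    (hpack : ∀ P ∈ F, ∑ Q ∈ F with Q ⊆ P, (volume Q).toReal ≤ 2 * (volume P).toReal)
    {h : (Fin n → ℝ) → ℝ} (hi : IntegrableOn h U) (he : IntegrableOn (fun x => Real.exp (h x)) U) :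
    ∑ Q ∈ F, (volume Q).toReal * Real.exp (avg Q h) ≤ 8 * ∫ x in U, Real.exp (h x) := by
  have hone : IntegrableOn (fun _ : Fin n → ℝ => (1 : ℝ)) U := integrableOn_const hU
  have hh : IntegrableOn (fun x => Real.exp (h x / 2)) U := by
    refine Integrable.mono' (he.add hone)
      (Real.continuous_exp.comp_aestronglyMeasurable (hi.div_const 2).aestronglyMeasurable)
      (ae_of_all _ fun x => ?_)
    have h3 : Real.exp (h x) = Real.exp (h x / 2) * Real.exp (h x / 2) := by
      rw [← Real.exp_add]; ring_nf
    simp only [Pi.add_apply, Real.norm_eq_abs, abs_of_pos (Real.exp_pos _)]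
    nlinarith [sq_nonneg (Real.exp (h x / 2) - 1), Real.exp_pos (h x / 2)]
  have hsq : ∀ x, Real.exp (h x / 2) ^ (2 : ℝ) * 1 = Real.exp (h x) := fun x => by
    rw [← Real.exp_mul]; ring_nf
  have hvol : ∀ Q : Set (Fin n → ℝ), ∫ _ in Q, (1 : ℝ) = (volume Q).toReal := fun Q => by
    simp [Measure.real]
  have htop : ∀ Q ∈ F, volume Q ≠ ∞ := fun Q hQ => measure_ne_top_of_subset (hF Q hQ).2.1 hU
  have hCE := carleson_embedding (p := 2) (by norm_num) (μ := volume) (s := fun _ => (1 : ℝ))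
    (g := fun x => Real.exp (h x / 2)) (fun _ => zero_le_one) (fun x => (Real.exp_pos _).le)
    (c := fun Q => (volume Q).toReal) (fun _ => ENNReal.toReal_nonneg) (F := F) (U := U) hone
    (by simpa using hh) (by simpa only [hsq] using he)
    (fun Q hQ => ⟨(hF Q hQ).1, (hF Q hQ).2.1, by
      rw [hvol]; exact ENNReal.toReal_pos (hF Q hQ).2.2 (htop Q hQ)⟩) hlam (A := 2) (by norm_num)
    (fun P hP => by rw [hvol]; exact hpack P hP)
  simp only [hsq, hvol, mul_one] at hCE
  refine (Finset.sum_le_sum fun Q hQ => ?_).trans (hCE.trans (le_of_eq ?_))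
  · gcongr
    have hQU := (hF Q hQ).2.1
    have hJ := exp_avg_le (hF Q hQ).2.2 (htop Q hQ) ((hi.mono_set hQU).div_const 2)
      (hh.mono_set hQU)
    have h6 : avg Q (fun x => h x / 2) * 2 = avg Q h := by
      rw [avg, avg, integral_div]; ring
    rw [← h6, Real.exp_mul]
    refine Real.rpow_le_rpow (Real.exp_pos _).le (hJ.trans (le_of_eq ?_)) (by norm_num)
    rw [avg, inv_mul_eq_div]
  · norm_num

open Classical in
/-- Sparse families satisfy the Carleson packing condition. -/
theorem IsSparse.sum_volume_le {n : ℕ} {𝒮 : Set (Set (Fin n → ℝ))} (h𝒮 : IsSparse 𝒮)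
    {F : Finset (Set (Fin n → ℝ))} (hF𝒮 : ∀ Q ∈ F, Q ∈ 𝒮)
    (hF : ∀ Q ∈ F, MeasurableSet Q ∧ volume Q ≠ ∞)
    (hlam : ∀ Q ∈ F, ∀ P ∈ F, Q ⊆ P ∨ P ⊆ Q ∨ Disjoint Q P) (P : Set (Fin n → ℝ)) (hP : P ∈ F) :
    ∑ Q ∈ F with Q ⊆ P, (volume Q).toReal ≤ 2 * (volume P).toReal := by
  set E : Set (Fin n → ℝ) → Set (Fin n → ℝ) := fun Q => Q \ ⋃ Q' ∈ F.filter (· ⊂ Q), Q' with hE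
  have hEm : ∀ Q ∈ F, MeasurableSet (E Q) := fun Q hQ =>
    (hF Q hQ).1.diff (Finset.measurableSet_biUnion _ fun Q' hQ' =>
      (hF Q' (Finset.mem_filter.1 hQ').1).1)
  have hEvol : ∀ Q ∈ F, volume Q ≤ 2 * volume (E Q) := by
    intro Q hQ
    have h1 : volume (⋃ Q' ∈ F.filter (· ⊂ Q), Q') ≤ volume Q / 2 := by
      refine (measure_mono ?_).trans (h𝒮 Q (hF𝒮 Q hQ))
      intro x hx
      simp only [mem_iUnion, Finset.mem_filter] at hx
      obtain ⟨Q', ⟨h1, h2⟩, h3⟩ := hx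
      exact mem_biUnion (show Q' ∈ {Q' | Q' ∈ 𝒮 ∧ Q' ⊂ Q} from ⟨hF𝒮 Q' h1, h2⟩) h3
    have h2 : volume Q ≤ volume Q / 2 + volume (E Q) := by
      calc volume Q ≤ volume ((⋃ Q' ∈ F.filter (· ⊂ Q), Q') ∪ E Q) := by
            refine measure_mono fun x hx => ?_
            by_cases h : x ∈ ⋃ Q' ∈ F.filter (· ⊂ Q), Q'
            · exact Or.inl h
            · exact Or.inr ⟨hx, h⟩
        _ ≤ _ := (measure_union_le _ _).trans (by gcongr)
    have h3 : volume Q / 2 ≤ volume (E Q) := by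
      have h4 : volume Q / 2 ≠ ∞ := ENNReal.div_ne_top (hF Q hQ).2 (by norm_num)
      nth_rewrite 1 [← ENNReal.add_halves (volume Q)] at h2
      exact (ENNReal.add_le_add_iff_left h4).1 h2
    calc volume Q = 2 * (volume Q / 2) := by
          rw [ENNReal.mul_div_cancel (by norm_num) (by norm_num)]
      _ ≤ _ := by gcongr
  have hdisj : ((F.filter (· ⊆ P) : Finset _) : Set (Set (Fin n → ℝ))).PairwiseDisjoint E := by
    have aux : ∀ Q₁ ∈ F, ∀ Q₂ : Set (Fin n → ℝ), Q₁ ⊂ Q₂ → Disjoint (E Q₁) (E Q₂) := by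
      intro Q₁ h₁ Q₂ h
      refine Set.disjoint_left.2 fun x hx hx' => hx'.2 ?_
      exact mem_biUnion (Finset.mem_coe.2 (Finset.mem_filter.2 ⟨h₁, h⟩)) hx.1
    intro Q₁ h₁ Q₂ h₂ hne
    have h₁' := (Finset.mem_filter.1 (Finset.mem_coe.1 h₁)).1
    have h₂' := (Finset.mem_filter.1 (Finset.mem_coe.1 h₂)).1
    rcases hlam Q₁ h₁' Q₂ h₂' with h | h | h
    · exact aux _ h₁' _ (h.ssubset_of_ne hne)
    · exact (aux _ h₂' _ (h.ssubset_of_ne hne.symm)).symm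
    · exact h.mono sdiff_subset sdiff_subset
  have hsum : ∑ Q ∈ F with Q ⊆ P, volume Q ≤ 2 * volume P := by
    calc ∑ Q ∈ F with Q ⊆ P, volume Q ≤ ∑ Q ∈ F with Q ⊆ P, 2 * volume (E Q) :=
          Finset.sum_le_sum fun Q hQ => hEvol Q (Finset.mem_filter.1 hQ).1
      _ = 2 * volume (⋃ Q ∈ F.filter (· ⊆ P), E Q) := by
          rw [← Finset.mul_sum, measure_biUnion_finset hdisj
            fun Q hQ => hEm Q (Finset.mem_filter.1 hQ).1]
      _ ≤ 2 * volume P := by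
          gcongr
          exact iUnion₂_subset fun Q hQ => sdiff_subset.trans (Finset.mem_filter.1 hQ).2
  rw [← ENNReal.toReal_sum fun Q hQ => (hF Q (Finset.mem_filter.1 hQ).1).2]
  have := ENNReal.toReal_mono (ENNReal.mul_ne_top (by norm_num) (hF P hP).2) hsum
  simpa using this

theorem le_of_le_mul_rpow_mul_rpow {p : ℝ} (hp : 1 < p) {I K a b : ℝ} (hI : 0 ≤ I) (hK : 0 ≤ K)
    (ha : 0 ≤ a) (hb : 0 ≤ b) (h : I ≤ K * (a ^ ((p - 1) / p) * (b * I) ^ (1 / p))) :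
    I ≤ b ^ (1 / (p - 1)) * K ^ (p / (p - 1)) * a := by
  have hp1 : 0 < p - 1 := by linarith
  have hp0 : 0 < p := by linarith
  rcases hI.eq_or_lt with h0 | hI
  · rw [← h0]; positivity
  have h1 := Real.rpow_le_rpow hI.le h (show 0 ≤ p / (p - 1) by positivity)
  rw [Real.mul_rpow hK (by positivity), Real.mul_rpow (by positivity) (by positivity),
    ← Real.rpow_mul ha, ← Real.rpow_mul (by positivity),
    show (p - 1) / p * (p / (p - 1)) = 1 by field_simp,
    show 1 / p * (p / (p - 1)) = 1 / (p - 1) by field_simp, Real.rpow_one,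
    Real.mul_rpow hb hI.le, show p / (p - 1) = 1 + 1 / (p - 1) by field_simp; ring,
    Real.rpow_add hI, Real.rpow_one, ← show p / (p - 1) = 1 + 1 / (p - 1) by field_simp; ring] at h1
  have h2 : 0 < I ^ (1 / (p - 1)) := Real.rpow_pos_of_pos hI _
  refine le_of_mul_le_mul_right ?_ h2
  linarith

open Classical in
/-- The dual testing bound for a finite laminar family with the Carleson packing condition. -/
theorem integral_sum_indicator_rpow_le {n : ℕ} {p : ℝ} (hp : 1 < p)
    {F : Finset (Set (Fin n → ℝ))} {R : Set (Fin n → ℝ)} (hR : volume R ≠ ∞)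
    (hF : ∀ Q ∈ F, MeasurableSet Q ∧ Q ⊆ R ∧ volume Q ≠ 0)
    (hlam : ∀ Q ∈ F, ∀ P ∈ F, Q ⊆ P ∨ P ⊆ Q ∨ Disjoint Q P)
    (hpack : ∀ P ∈ F, ∑ Q ∈ F with Q ⊆ P, (volume Q).toReal ≤ 2 * (volume P).toReal)
    {w σ : (Fin n → ℝ) → ℝ} (hw : ∀ x, 0 < w x) (hσ : σ = fun x => w x ^ (-(1 / (p - 1))))
    (hwi : IntegrableOn w R) (hσi : IntegrableOn σ R)
    (hli : IntegrableOn (fun x => Real.log (w x)) R) {K : ℝ} (hK : 0 ≤ K)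
    (hKF : ∀ Q ∈ F, avg Q w * avg Q σ ≤
      K * Real.exp ((1 - 1 / (p - 1)) * avg Q fun x => Real.log (w x))) :
    IntegrableOn (fun x => (∑ Q ∈ F, Q.indicator (fun _ => avg Q w) x) ^ (p / (p - 1)) * σ x) R ∧
    ∫ x in R, (∑ Q ∈ F, Q.indicator (fun _ => avg Q w) x) ^ (p / (p - 1)) * σ x ≤
      (8 * (2 ^ p / (p - 1))) ^ (1 / (p - 1)) * K ^ (p / (p - 1)) * (8 * ∫ x in R, w x) := by
  have hp1 : 0 < p - 1 := by linarith
  have hp0 : 0 < p := by linarith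
  have hσ0 : ∀ x, 0 < σ x := fun x => by rw [hσ]; exact Real.rpow_pos_of_pos (hw x) _
  have hσexp : ∀ x, Real.exp (-(1 / (p - 1)) * Real.log (w x)) = σ x := fun x => by
    rw [hσ]; simp only; rw [Real.rpow_def_of_pos (hw x), mul_comm]
  have htop : ∀ Q ∈ F, volume Q ≠ ∞ := fun Q hQ => measure_ne_top_of_subset (hF Q hQ).2.1 hR
  have hWnn : ∀ Q, 0 ≤ avg Q w := fun Q =>
    mul_nonneg (inv_nonneg.2 ENNReal.toReal_nonneg) (integral_nonneg fun x => (hw x).le)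
  set f : (Fin n → ℝ) → ℝ := fun x => ∑ Q ∈ F, Q.indicator (fun _ => avg Q w) x with hf
  have hf0 : ∀ x, 0 ≤ f x := fun x =>
    Finset.sum_nonneg fun Q _ => indicator_nonneg (fun _ _ => hWnn Q) x
  have hfm : Measurable f := Finset.measurable_sum _ fun Q hQ =>
    measurable_const.indicator (hF Q hQ).1
  have hfB : ∀ x, f x ≤ ∑ Q ∈ F, avg Q w := fun x =>
    Finset.sum_le_sum fun Q _ => indicator_le_self' (fun _ _ => hWnn Q) x
  have hint : ∀ r : ℝ, 0 ≤ r → IntegrableOn (fun x => f x ^ r * σ x) R := by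
    intro r hr
    refine Integrable.bdd_mul (c := (∑ Q ∈ F, avg Q w) ^ r) hσi
      (hfm.pow_const r).aestronglyMeasurable (ae_of_all _ fun x => ?_)
    rw [Real.norm_eq_abs, abs_of_nonneg (Real.rpow_nonneg (hf0 x) r)]
    exact Real.rpow_le_rpow (hf0 x) (hfB x) hr
  refine ⟨hint _ (by positivity), ?_⟩
  set g : (Fin n → ℝ) → ℝ := fun x => f x ^ (1 / (p - 1)) with hg
  have hg0 : ∀ x, 0 ≤ g x := fun x => Real.rpow_nonneg (hf0 x) _
  have hgi : IntegrableOn (fun x => g x * σ x) R := hint _ (by positivity)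
  have hgp : ∀ x, g x ^ p = f x ^ (p / (p - 1)) := fun x => by
    rw [hg]; simp only; rw [← Real.rpow_mul (hf0 x)]; congr 1; field_simp
  have hfg : ∀ x, f x ^ (p / (p - 1)) = f x * g x := fun x => by
    rw [show p / (p - 1) = 1 + 1 / (p - 1) by field_simp; ring,
      Real.rpow_add_of_nonneg (hf0 x) zero_le_one (by positivity), Real.rpow_one]
  have hm : ∀ Q ∈ F, 0 < ∫ x in Q, σ x := fun Q hQ =>
    setIntegral_pos_of_pos (hF Q hQ).2.2 hσ0 (hσi.mono_set (hF Q hQ).2.1)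
  have hIeq : ∫ x in R, f x ^ (p / (p - 1)) * σ x = ∑ Q ∈ F, avg Q w * ∫ x in Q, g x * σ x := by
    have h1 : ∀ x, f x ^ (p / (p - 1)) * σ x =
        ∑ Q ∈ F, Q.indicator (fun x => avg Q w * (g x * σ x)) x := fun x => by
      rw [hfg, mul_assoc, hf, Finset.sum_mul]
      refine Finset.sum_congr rfl fun Q _ => ?_
      by_cases hx : x ∈ Q <;> simp [hx]
    simp only [h1]
    rw [integral_finsetSum _ fun Q hQ => (hgi.const_mul _).indicator (hF Q hQ).1]
    refine Finset.sum_congr rfl fun Q hQ => ?_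
    rw [setIntegral_indicator (hF Q hQ).1, inter_eq_self_of_subset_right (hF Q hQ).2.1,
      integral_const_mul]
  set I := ∫ x in R, f x ^ (p / (p - 1)) * σ x with hI
  have hI0 : 0 ≤ I := integral_nonneg fun x => mul_nonneg (Real.rpow_nonneg (hf0 x) _) (hσ0 x).le
  set V : Set (Fin n → ℝ) → ℝ := fun Q => (volume Q).toReal with hV
  set L : Set (Fin n → ℝ) → ℝ := fun Q => avg Q fun x => Real.log (w x) with hL
  set X : Set (Fin n → ℝ) → ℝ := fun Q => (∫ x in Q, g x * σ x) / ∫ x in Q, σ x with hX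
  have hX0 : ∀ Q, 0 ≤ X Q := fun Q => div_nonneg
    (integral_nonneg fun x => mul_nonneg (hg0 x) (hσ0 x).le) (integral_nonneg fun x => (hσ0 x).le)
  have hV0 : ∀ Q, 0 ≤ V Q := fun Q => ENNReal.toReal_nonneg
  have hLσ : ∀ Q, avg Q (fun x => -(1 / (p - 1)) * Real.log (w x)) = -(1 / (p - 1)) * L Q :=
    fun Q => by rw [avg, integral_const_mul, hL]; simp only [avg]; ring
  have hwsum : ∑ Q ∈ F, V Q * Real.exp (L Q) ≤ 8 * ∫ x in R, w x := by
    have := sum_volume_mul_exp_avg_le hR hF hlam hpack hli (by simpa only [Real.exp_log (hw _)])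
    simpa only [Real.exp_log (hw _)] using this
  have hσsum : ∑ Q ∈ F, V Q * Real.exp (-(1 / (p - 1)) * L Q) * X Q ^ p ≤
      8 * (2 ^ p / (p - 1)) * I := by
    have h := carleson_embedding hp (μ := volume) (s := σ) (g := g) (fun x => (hσ0 x).le) hg0
      (c := fun Q => V Q * Real.exp (-(1 / (p - 1)) * L Q))
      (fun Q => mul_nonneg (hV0 Q) (Real.exp_pos _).le) (F := F) (U := R) hσi hgi
      (by simpa only [hgp] using hint (p / (p - 1)) (by positivity))
      (fun Q hQ => ⟨(hF Q hQ).1, (hF Q hQ).2.1, hm Q hQ⟩) hlam (A := 8) (by norm_num)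
      (fun P hP => ?_)
    · simpa only [hgp] using h
    · have hPR := (hF P hP).2.1
      have h2 := sum_volume_mul_exp_avg_le (F := F.filter (· ⊆ P)) (htop P hP)
        (fun Q hQ => ⟨(hF Q (Finset.mem_filter.1 hQ).1).1, (Finset.mem_filter.1 hQ).2,
          (hF Q (Finset.mem_filter.1 hQ).1).2.2⟩)
        (fun Q hQ Q' hQ' => hlam Q (Finset.mem_filter.1 hQ).1 Q' (Finset.mem_filter.1 hQ').1)
        (fun Q hQ => (Finset.sum_le_sum_of_subset_of_nonneg
          (Finset.filter_subset_filter _ (Finset.filter_subset _ _))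
          fun _ _ _ => ENNReal.toReal_nonneg).trans (hpack Q (Finset.mem_filter.1 hQ).1))
        (h := fun x => -(1 / (p - 1)) * Real.log (w x)) ((hli.mono_set hPR).const_mul _)
        (by simpa only [hσexp] using hσi.mono_set hPR)
      simpa only [hσexp, hLσ] using h2
  have hstep : I ≤ K * ∑ Q ∈ F, (V Q * Real.exp (L Q)) ^ ((p - 1) / p) *
      (V Q * Real.exp (-(1 / (p - 1)) * L Q) * X Q ^ p) ^ (1 / p) := by
    rw [hIeq, Finset.mul_sum]
    refine Finset.sum_le_sum fun Q hQ => ?_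
    have hVpos : 0 < V Q := ENNReal.toReal_pos (hF Q hQ).2.2 (htop Q hQ)
    have e1 : avg Q w * ∫ x in Q, g x * σ x = avg Q w * avg Q σ * (V Q * X Q) := by
      have := (hm Q hQ).ne'
      rw [hX, avg, avg]
      change _ = (V Q)⁻¹ * _ * ((V Q)⁻¹ * _) * _
      change (V Q)⁻¹ * _ * _ = _
      field_simp
    have e2 : (V Q * Real.exp (L Q)) ^ ((p - 1) / p) *
        (V Q * Real.exp (-(1 / (p - 1)) * L Q) * X Q ^ p) ^ (1 / p) =
        Real.exp ((1 - 1 / (p - 1)) * L Q) * (V Q * X Q) := by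
      rw [Real.mul_rpow hVpos.le (Real.exp_pos _).le,
        Real.mul_rpow (by positivity) (Real.rpow_nonneg (hX0 Q) p),
        Real.mul_rpow hVpos.le (Real.exp_pos _).le, ← Real.rpow_mul (hX0 Q), ← Real.exp_mul,
        ← Real.exp_mul, mul_one_div_cancel hp0.ne', Real.rpow_one]
      have e3 : V Q ^ ((p - 1) / p) * V Q ^ (1 / p) = V Q := by
        rw [← Real.rpow_add hVpos, show (p - 1) / p + 1 / p = 1 by field_simp; ring, Real.rpow_one]
      have e4 : Real.exp (L Q * ((p - 1) / p)) * Real.exp (-(1 / (p - 1)) * L Q * (1 / p)) =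
          Real.exp ((1 - 1 / (p - 1)) * L Q) := by
        rw [← Real.exp_add]
        congr 1
        field_simp
        ring
      rw [← e4]
      nth_rewrite 3 [← e3]
      ring
    rw [e1, e2, ← mul_assoc K]
    exact mul_le_mul_of_nonneg_right (hKF Q hQ) (mul_nonneg hVpos.le (hX0 Q))
  have hpq : (p / (p - 1)).HolderConjugate p := (Real.HolderConjugate.conjExponent hp).symm
  have hHol := Real.inner_le_Lp_mul_Lq_of_nonneg F hpq
    (f := fun Q => (V Q * Real.exp (L Q)) ^ ((p - 1) / p))
    (g := fun Q => (V Q * Real.exp (-(1 / (p - 1)) * L Q) * X Q ^ p) ^ (1 / p))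
    (fun Q _ => Real.rpow_nonneg (mul_nonneg (hV0 Q) (Real.exp_pos _).le) _)
    (fun Q _ => Real.rpow_nonneg (mul_nonneg (mul_nonneg (hV0 Q) (Real.exp_pos _).le)
      (Real.rpow_nonneg (hX0 Q) p)) _)
  have e5 : ∀ Q, ((V Q * Real.exp (L Q)) ^ ((p - 1) / p)) ^ (p / (p - 1)) =
      V Q * Real.exp (L Q) := fun Q => by
    rw [← Real.rpow_mul (mul_nonneg (hV0 Q) (Real.exp_pos _).le),
      show (p - 1) / p * (p / (p - 1)) = 1 by field_simp, Real.rpow_one]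
  have e6 : ∀ Q, ((V Q * Real.exp (-(1 / (p - 1)) * L Q) * X Q ^ p) ^ (1 / p)) ^ p =
      V Q * Real.exp (-(1 / (p - 1)) * L Q) * X Q ^ p := fun Q => by
    rw [← Real.rpow_mul (mul_nonneg (mul_nonneg (hV0 Q) (Real.exp_pos _).le)
      (Real.rpow_nonneg (hX0 Q) p)), one_div_mul_cancel hp0.ne', Real.rpow_one]
  simp only [e5, e6, one_div_div] at hHol
  have hwR : 0 ≤ ∫ x in R, w x := integral_nonneg fun x => (hw x).le
  refine le_of_le_mul_rpow_mul_rpow hp hI0 hK (by positivity) (by positivity) (hstep.trans ?_)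
  refine mul_le_mul_of_nonneg_left (hHol.trans ?_) hK
  have n1 : 0 ≤ ∑ Q ∈ F, V Q * Real.exp (L Q) :=
    Finset.sum_nonneg fun Q _ => mul_nonneg (hV0 Q) (Real.exp_pos _).le
  have n2 : 0 ≤ ∑ Q ∈ F, V Q * Real.exp (-(1 / (p - 1)) * L Q) * X Q ^ p :=
    Finset.sum_nonneg fun Q _ => mul_nonneg (mul_nonneg (hV0 Q) (Real.exp_pos _).le)
      (Real.rpow_nonneg (hX0 Q) p)
  gcongr

theorem IsCube.volume_ne {n : ℕ} {Q : Set (Fin n → ℝ)} (h : IsCube Q) :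
    volume Q ≠ 0 ∧ volume Q ≠ ∞ := by
  obtain ⟨a, l, hl, rfl⟩ := h
  refine ⟨?_, isCompact_Icc.measure_lt_top.ne⟩
  rw [Real.volume_Icc_pi, Finset.prod_ne_zero_iff]
  intro i _
  simpa using hl

theorem IsCube.isCompact {n : ℕ} {Q : Set (Fin n → ℝ)} (h : IsCube Q) : IsCompact Q := by
  obtain ⟨a, l, -, rfl⟩ := h
  exact isCompact_Icc

theorem IsDyadicCubeOf.exists_isCube {n : ℕ} {k : ℤ} {Q : Set (Fin n → ℝ)}
    (h : IsDyadicCubeOf k Q) : ∃ P, IsCube P ∧ Q =ᵐ[volume] P := by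
  obtain ⟨a, rfl⟩ := h
  exact ⟨_, ⟨a, 2 ^ k, by positivity, rfl⟩, Measure.univ_pi_Ico_ae_eq_Icc (f := a)
    (g := fun i => a i + 2 ^ k)⟩

theorem IsDyadicCubeOf.measurableSet {n : ℕ} {k : ℤ} {Q : Set (Fin n → ℝ)}
    (h : IsDyadicCubeOf k Q) : MeasurableSet Q := by
  obtain ⟨a, rfl⟩ := h
  exact MeasurableSet.univ_pi fun _ => measurableSet_Ico

theorem IsDyadicCubeOf.interior_nonempty {n : ℕ} {k : ℤ} {Q : Set (Fin n → ℝ)}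
    (h : IsDyadicCubeOf k Q) : (interior Q).Nonempty := by
  obtain ⟨a, rfl⟩ := h
  rw [interior_pi_set finite_univ, univ_pi_nonempty_iff]
  intro i
  rw [interior_Ico, nonempty_Ioo]
  linarith [zpow_pos (zero_lt_two (α := ℝ)) k]

theorem IsDyadicGrid.countable {n : ℕ} {𝒟 : Set (Set (Fin n → ℝ))} (h : IsDyadicGrid 𝒟) :
    𝒟.Countable := by
  have h1 : 𝒟 ⊆ ⋃ k : ℤ, {Q | Q ∈ 𝒟 ∧ IsDyadicCubeOf k Q} := fun Q hQ =>
    mem_iUnion.2 ((h.1 Q hQ).imp fun _ hk => ⟨hQ, hk⟩)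
  exact (countable_iUnion fun k => (h.2.2 k).2.countable_of_nonempty_interior
    fun Q hQ => hQ.2.interior_nonempty).mono h1

section MixedConstant

variable {n : ℕ} {p : ℝ} {w : (Fin n → ℝ) → ℝ} {Q : Set (Fin n → ℝ)}

theorem exp_avg_log_le (h0 : volume Q ≠ 0) (h1 : volume Q ≠ ∞) (hw : ∀ x, 0 < w x)
    (hwi : IntegrableOn w Q) (hli : IntegrableOn (fun x => Real.log (w x)) Q) :
    Real.exp (avg Q fun x => Real.log (w x)) ≤ avg Q w := by
  have := exp_avg_le h0 h1 hli (by simpa only [Real.exp_log (hw _)])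
  simpa only [Real.exp_log (hw _)] using this

theorem exp_neg_mul_avg_log_le (h0 : volume Q ≠ 0) (h1 : volume Q ≠ ∞) (hw : ∀ x, 0 < w x)
    (hσi : IntegrableOn (fun x => w x ^ (-(1 / (p - 1)))) Q)
    (hli : IntegrableOn (fun x => Real.log (w x)) Q) :
    Real.exp (-(1 / (p - 1)) * avg Q fun x => Real.log (w x)) ≤
      avg Q fun x => w x ^ (-(1 / (p - 1))) := by
  have hσexp : ∀ x, Real.exp (-(1 / (p - 1)) * Real.log (w x)) = w x ^ (-(1 / (p - 1))) :=
    fun x => by rw [Real.rpow_def_of_pos (hw x), mul_comm]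
  have := exp_avg_le h0 h1 (hli.const_mul (-(1 / (p - 1)))) (by simpa only [hσexp])
  simp only [hσexp] at this
  refine le_trans (le_of_eq ?_) this
  rw [avg, avg, integral_const_mul]
  ring_nf

theorem one_le_AexpQ (h0 : volume Q ≠ 0) (h1 : volume Q ≠ ∞) (hw : ∀ x, 0 < w x)
    (hwi : IntegrableOn w Q) (hli : IntegrableOn (fun x => Real.log (w x)) Q) :
    1 ≤ AexpQ w Q := by
  rw [AexpQ, Real.exp_neg, ← div_eq_mul_inv, one_le_div (Real.exp_pos _)]
  exact exp_avg_log_le h0 h1 hw hwi hli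

theorem AexpQ_le_ApQ (hp : 1 < p) (h0 : volume Q ≠ 0) (h1 : volume Q ≠ ∞) (hw : ∀ x, 0 < w x)
    (hσi : IntegrableOn (fun x => w x ^ (-(1 / (p - 1)))) Q)
    (hli : IntegrableOn (fun x => Real.log (w x)) Q) : AexpQ w Q ≤ ApQ p w Q := by
  have hp1 : 0 < p - 1 := by linarith
  refine mul_le_mul_of_nonneg_left ?_
    (mul_nonneg (inv_nonneg.2 ENNReal.toReal_nonneg) (integral_nonneg fun x => (hw x).le))
  have := Real.rpow_le_rpow (Real.exp_pos _).le (exp_neg_mul_avg_log_le h0 h1 hw hσi hli) hp1.le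
  refine le_trans (le_of_eq ?_) this
  rw [← Real.exp_mul]
  congr 1
  field_simp

theorem mixed_le (hp : 1 < p) (h0 : volume Q ≠ 0) (h1 : volume Q ≠ ∞) (hw : ∀ x, 0 < w x)
    (hwi : IntegrableOn w Q) (hσi : IntegrableOn (fun x => w x ^ (-(1 / (p - 1)))) Q)
    (hli : IntegrableOn (fun x => Real.log (w x)) Q) {B : ℝ} (hB : ApQ p w Q ≤ B) :
    ApQ p w Q ^ (1 / (p - 1)) * AexpQ w Q ^ (1 - 1 / (p - 1)) ≤ max B (B ^ (1 / (p - 1))) := by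
  have hp1 : 0 < p - 1 := by linarith
  have hE := one_le_AexpQ h0 h1 hw hwi hli
  have hEA := AexpQ_le_ApQ hp h0 h1 hw hσi hli
  have hE0 : 0 < AexpQ w Q := by linarith
  have hA0 : 0 < ApQ p w Q := by linarith
  have hAp := Real.rpow_nonneg hA0.le (1 / (p - 1))
  rcases le_total 0 (1 - 1 / (p - 1)) with hθ | hθ
  · refine le_max_of_le_left ?_
    calc _ ≤ ApQ p w Q ^ (1 / (p - 1)) * ApQ p w Q ^ (1 - 1 / (p - 1)) := by gcongr
      _ = ApQ p w Q := by rw [← Real.rpow_add hA0, add_sub_cancel, Real.rpow_one]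
      _ ≤ B := hB
  · refine le_max_of_le_right ?_
    calc _ ≤ ApQ p w Q ^ (1 / (p - 1)) * 1 := by
          gcongr
          exact Real.rpow_le_one_of_one_le_of_nonpos hE hθ
      _ ≤ B ^ (1 / (p - 1)) := by
          rw [mul_one]
          exact Real.rpow_le_rpow hA0.le hB (by positivity)

theorem avg_mul_avg_eq (hp : 1 < p) (h0 : volume Q ≠ 0) (h1 : volume Q ≠ ∞) (hw : ∀ x, 0 < w x)
    (hwi : IntegrableOn w Q) :
    avg Q w * (avg Q fun x => w x ^ (-(1 / (p - 1)))) =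
      ApQ p w Q ^ (1 / (p - 1)) * AexpQ w Q ^ (1 - 1 / (p - 1)) *
        Real.exp ((1 - 1 / (p - 1)) * avg Q fun x => Real.log (w x)) := by
  have hp1 : 0 < p - 1 := by linarith
  have hW : 0 < avg Q w :=
    mul_pos (inv_pos.2 (ENNReal.toReal_pos h0 h1)) (setIntegral_pos_of_pos h0 hw hwi)
  have hS : 0 ≤ avg Q fun x => w x ^ (-(1 / (p - 1))) :=
    mul_nonneg (inv_nonneg.2 ENNReal.toReal_nonneg)
      (integral_nonneg fun x => Real.rpow_nonneg (hw x).le _)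
  rw [ApQ, AexpQ, Real.mul_rpow hW.le (Real.rpow_nonneg hS _),
    Real.mul_rpow hW.le (Real.exp_pos _).le, ← Real.rpow_mul hS, mul_one_div_cancel hp1.ne',
    Real.rpow_one, ← Real.exp_mul]
  have e1 : avg Q w ^ (1 / (p - 1)) * avg Q w ^ (1 - 1 / (p - 1)) = avg Q w := by
    rw [← Real.rpow_add hW, add_sub_cancel, Real.rpow_one]
  set L := avg Q fun x => Real.log (w x)
  have e2 : Real.exp (-L * (1 - 1 / (p - 1))) * Real.exp ((1 - 1 / (p - 1)) * L) = 1 := by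
    rw [← Real.exp_add, ← Real.exp_zero]
    ring_nf
  calc _ = (avg Q w ^ (1 / (p - 1)) * avg Q w ^ (1 - 1 / (p - 1))) *
        (avg Q fun x => w x ^ (-(1 / (p - 1)))) *
        (Real.exp (-L * (1 - 1 / (p - 1))) * Real.exp ((1 - 1 / (p - 1)) * L)) := by
        rw [e1, e2, mul_one]
    _ = _ := by ring

end MixedConstant

/-- Monotone convergence: it suffices to bound the finite partial sums of `T^𝒮`. -/
theorem lintegral_sparseT_rpow_mul_le {n : ℕ} {𝒮 : Set (Set (Fin n → ℝ))} (hc : 𝒮.Countable)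
    (hm : ∀ Q ∈ 𝒮, MeasurableSet Q) {w : (Fin n → ℝ) → ℝ} {h : (Fin n → ℝ) → ℝ≥0∞}
    {R : Set (Fin n → ℝ)} (hh : AEMeasurable h (volume.restrict R)) {q : ℝ} (hq : 0 < q)
    {B : ℝ≥0∞}
    (hB : ∀ F : Finset (Set (Fin n → ℝ)), (∀ Q ∈ F, Q ∈ 𝒮) →
      ∫⁻ x in R, (∑ Q ∈ F, Q.indicator (fun _ => ENNReal.ofReal (avg Q w)) x) ^ q * h x ≤ B) :
    ∫⁻ x in R, sparseT 𝒮 w x ^ q * h x ≤ B := by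
  have : Countable 𝒮 := hc.to_subtype
  have e : ∀ x, sparseT 𝒮 w x ^ q * h x = ⨆ F : Finset 𝒮,
      (∑ Q ∈ F, Q.1.indicator (fun _ => ENNReal.ofReal (avg Q.1 w)) x) ^ q * h x := by
    intro x
    rw [sparseT, ENNReal.tsum_eq_iSup_sum, ← ENNReal.iSup_mul]
    congr 1
    exact (ENNReal.orderIsoRpow q hq).map_iSup _
  simp only [e]
  rw [lintegral_iSup_directed]
  · refine iSup_le fun F => ?_
    have := hB (F.map (Function.Embedding.subtype _)) (fun Q hQ => by
      obtain ⟨Q', -, rfl⟩ := Finset.mem_map.1 hQ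
      exact Q'.2)
    simpa only [Finset.sum_map, Function.Embedding.subtype_apply] using this
  · intro F
    refine AEMeasurable.mul (Measurable.aemeasurable ?_) hh
    exact (Finset.measurable_sum _ fun Q _ =>
      measurable_const.indicator (hm Q.1 Q.2)).pow_const q
  · refine Monotone.directed_le fun F G hFG x => ?_
    refine mul_le_mul' (ENNReal.rpow_le_rpow ?_ hq.le) le_rfl
    exact Finset.sum_le_sum_of_subset hFG

/-- Theorem (testing bound, one-supremum exponential mixed constant):
for `w ∈ A_p`, `σ = w^{1-p'}`, and a sparse family `𝒮` of dyadic cubes,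
`∫_R (T^{𝒮(R)} w)^{p'} σ ≲ [w]_{(A_p)^{1/(p-1)}(A_∞^exp)^{1-1/(p-1)}}^{p'} w(R)`,
with implicit constant depending only on `p` and the dimension. -/
theorem stmt10 (p : ℝ) (hp : 1 < p) (n : ℕ) :
    ∃ C > (0 : ℝ), ∀ (𝒟 𝒮 : Set (Set (Fin n → ℝ))),
      IsDyadicGrid 𝒟 → 𝒮 ⊆ 𝒟 → IsSparse 𝒮 →
      ∀ (w σ : (Fin n → ℝ) → ℝ), (∀ x, 0 < w x) →
      σ = (fun x => w x ^ (-(1 / (p - 1)))) →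
      LocallyIntegrable w volume → LocallyIntegrable σ volume →
      LocallyIntegrable (fun x => Real.log (w x)) volume →
      BddAbove (Set.range fun Q : {Q : Set (Fin n → ℝ) // IsCube Q} => ApQ p w Q.1) →
      ∀ R : Set (Fin n → ℝ), IsCube R →
      ∫⁻ x in R, sparseT {Q | Q ∈ 𝒮 ∧ Q ⊆ R} w x ^ (p / (p - 1)) *
          ENNReal.ofReal (σ x) ≤
        ENNReal.ofReal (C *
          (⨆ Q : {Q : Set (Fin n → ℝ) // IsCube Q},
            ApQ p w Q.1 ^ (1 / (p - 1)) * AexpQ w Q.1 ^ (1 - 1 / (p - 1))) ^ (p / (p - 1)) *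
          ∫ x in R, w x) := by
  classical
  have hp1 : 0 < p - 1 := by linarith
  refine ⟨8 * (8 * (2 ^ p / (p - 1))) ^ (1 / (p - 1)), by positivity, ?_⟩
  intro 𝒟 𝒮 h𝒟 h𝒮𝒟 h𝒮 w σ hw hσ hwl hσl hll hAp R hR
  obtain ⟨B, hB⟩ := hAp
  have hwi : ∀ {Q : Set (Fin n → ℝ)}, IsCube Q → IntegrableOn w Q := fun hQ =>
    hwl.integrableOn_isCompact hQ.isCompact
  have hσi : ∀ {Q : Set (Fin n → ℝ)}, IsCube Q → IntegrableOn σ Q := fun hQ =>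
    hσl.integrableOn_isCompact hQ.isCompact
  have hli : ∀ {Q : Set (Fin n → ℝ)}, IsCube Q → IntegrableOn (fun x => Real.log (w x)) Q :=
    fun hQ => hll.integrableOn_isCompact hQ.isCompact
  have hbdd : BddAbove (range fun Q : {Q : Set (Fin n → ℝ) // IsCube Q} =>
      ApQ p w Q.1 ^ (1 / (p - 1)) * AexpQ w Q.1 ^ (1 - 1 / (p - 1))) := by
    refine ⟨max B (B ^ (1 / (p - 1))), ?_⟩
    rintro _ ⟨Q, rfl⟩
    exact mixed_le hp Q.2.volume_ne.1 Q.2.volume_ne.2 hw (hwi Q.2) (hσ ▸ hσi Q.2) (hli Q.2)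
      (hB ⟨Q, rfl⟩)
  set K := ⨆ Q : {Q : Set (Fin n → ℝ) // IsCube Q},
    ApQ p w Q.1 ^ (1 / (p - 1)) * AexpQ w Q.1 ^ (1 - 1 / (p - 1)) with hKdef
  have hmix0 : ∀ Q : {Q : Set (Fin n → ℝ) // IsCube Q},
      0 ≤ ApQ p w Q.1 ^ (1 / (p - 1)) * AexpQ w Q.1 ^ (1 - 1 / (p - 1)) := by
    intro Q
    have hE := one_le_AexpQ Q.2.volume_ne.1 Q.2.volume_ne.2 hw (hwi Q.2) (hli Q.2)
    have hEA := AexpQ_le_ApQ hp Q.2.volume_ne.1 Q.2.volume_ne.2 hw (hσ ▸ hσi Q.2) (hli Q.2)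
    exact mul_nonneg (Real.rpow_nonneg (by linarith) _) (Real.rpow_nonneg (by linarith) _)
  have hK : 0 ≤ K := Real.iSup_nonneg hmix0
  have hKQ : ∀ Q ∈ 𝒟, avg Q w * avg Q σ ≤
      K * Real.exp ((1 - 1 / (p - 1)) * avg Q fun x => Real.log (w x)) := by
    intro Q hQ
    obtain ⟨k, hk⟩ := h𝒟.1 Q hQ
    obtain ⟨P, hP, hQP⟩ := hk.exists_isCube
    rw [avg_congr_set hQP, avg_congr_set hQP, avg_congr_set hQP, hσ,
      avg_mul_avg_eq hp hP.volume_ne.1 hP.volume_ne.2 hw (hwi hP)]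
    exact mul_le_mul_of_nonneg_right (le_ciSup hbdd ⟨P, hP⟩) (Real.exp_pos _).le
  have hmeas : ∀ Q ∈ 𝒟, MeasurableSet Q ∧ volume Q ≠ 0 := by
    intro Q hQ
    obtain ⟨k, hk⟩ := h𝒟.1 Q hQ
    obtain ⟨P, hP, hQP⟩ := hk.exists_isCube
    exact ⟨hk.measurableSet, by rw [measure_congr hQP]; exact hP.volume_ne.1⟩
  have hRtop := hR.volume_ne.2
  refine lintegral_sparseT_rpow_mul_le (h𝒟.countable.mono fun Q hQ => h𝒮𝒟 hQ.1)
    (fun Q hQ => (hmeas Q (h𝒮𝒟 hQ.1)).1)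
    (hσi hR).aestronglyMeasurable.aemeasurable.ennreal_ofReal (by positivity) fun F hF => ?_
  have hlam : ∀ Q ∈ F, ∀ P ∈ F, Q ⊆ P ∨ P ⊆ Q ∨ Disjoint Q P := fun Q hQ P hP =>
    h𝒟.2.1 Q (h𝒮𝒟 (hF Q hQ).1) P (h𝒮𝒟 (hF P hP).1)
  obtain ⟨hint, hle⟩ := integral_sum_indicator_rpow_le hp hRtop
    (fun Q hQ => ⟨(hmeas Q (h𝒮𝒟 (hF Q hQ).1)).1, (hF Q hQ).2, (hmeas Q (h𝒮𝒟 (hF Q hQ).1)).2⟩)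
    hlam (h𝒮.sum_volume_le (fun Q hQ => (hF Q hQ).1) (fun Q hQ =>
      ⟨(hmeas Q (h𝒮𝒟 (hF Q hQ).1)).1, measure_ne_top_of_subset (hF Q hQ).2 hRtop⟩) hlam)
    hw hσ (hwi hR) (hσi hR) (hli hR) hK (fun Q hQ => hKQ Q (h𝒮𝒟 (hF Q hQ).1))
  have hWnn : ∀ Q, 0 ≤ avg Q w := fun Q =>
    mul_nonneg (inv_nonneg.2 ENNReal.toReal_nonneg) (integral_nonneg fun x => (hw x).le)
  have hsum0 : ∀ x, 0 ≤ ∑ Q ∈ F, Q.indicator (fun _ => avg Q w) x := fun x =>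
    Finset.sum_nonneg fun Q _ => indicator_nonneg (fun _ _ => hWnn Q) x
  have e : ∀ x, (∑ Q ∈ F, Q.indicator (fun _ => ENNReal.ofReal (avg Q w)) x) ^ (p / (p - 1)) *
      ENNReal.ofReal (σ x) = ENNReal.ofReal
        ((∑ Q ∈ F, Q.indicator (fun _ => avg Q w) x) ^ (p / (p - 1)) * σ x) := by
    intro x
    rw [ENNReal.ofReal_mul (Real.rpow_nonneg (hsum0 x) _),
      ← ENNReal.ofReal_rpow_of_nonneg (hsum0 x) (by positivity),
      ENNReal.ofReal_sum_of_nonneg fun Q _ => indicator_nonneg (fun _ _ => hWnn Q) x]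
    congr 2
    refine Finset.sum_congr rfl fun Q _ => ?_
    by_cases hx : x ∈ Q <;> simp [hx]
  simp only [e]
  rw [← ofReal_integral_eq_lintegral_ofReal hint (ae_of_all _ fun x =>
    mul_nonneg (Real.rpow_nonneg (hsum0 x) _)
      (by rw [hσ]; exact Real.rpow_nonneg (hw x).le _))]
  refine ENNReal.ofReal_le_ofReal (hle.trans (le_of_eq ?_))
  ring
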